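/- Let A and B be C*-algebras, let e ∈ A and f ∈ B be projections, set I = {a * e : a ∈ A} and J = {b * f : b ∈ B}, and let φ : I → J be a bijective linear map which is completely isometric. Then φ is multiplicative (φ(x * y) = φ(x) * φ(y) for all x, y ∈ I) if and only if φ(e) = f. -/

import Mathlib

open Filter Topology

/-- The canonical C*-norm of an `n × n` matrix over a (possibly non-unital) C*-algebra `A`:
the operator norm of left multiplication on the Hilbert `A`-module of columns `Aⁿ`.
(This is the unique C*-norm on `Mₙ(A)`.) -/
noncomputable def cnorm {A : Type*} [NonUnitalCStarAlgebra A] {n : ℕ}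
    (x : Matrix (Fin n) (Fin n) A) : ℝ :=
  sSup {r : ℝ | ∃ v : Fin n → A, ‖∑ i, star (v i) * v i‖ ≤ 1 ∧
    r = Real.sqrt ‖∑ i, star (x.mulVec v i) * (x.mulVec v i)‖}

/-- A map `T` defined on a subspace `V` of a C*-algebra `A`, with values in a C*-algebra `B`,
is completely isometric if for every `n`, applying `T` entrywise to `n × n` matrices with
entries in `V` preserves the canonical C*-norm of matrices. -/
def IsCompletelyIsometric {A B : Type*} [NonUnitalCStarAlgebra A] [NonUnitalCStarAlgebra B]
    {V : Submodule ℂ A} (T : V → B) : Prop :=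
  ∀ (n : ℕ) (x : Matrix (Fin n) (Fin n) V),
    cnorm (x.map T) = cnorm (x.map ((↑) : V → A))
/-- The left ideal `{a * e : a ∈ A}` of a C*-algebra `A`, as a `ℂ`-submodule. -/
def principalLeftIdeal (A : Type*) [NonUnitalCStarAlgebra A] (e : A) : Submodule ℂ A where
  carrier := {x | ∃ a : A, x = a * e}
  add_mem' := by rintro x y ⟨a, rfl⟩ ⟨b, rfl⟩; exact ⟨a + b, (add_mul a b e).symm⟩
  zero_mem' := ⟨0, (zero_mul e).symm⟩
  smul_mem' := by rintro c x ⟨a, rfl⟩; exact ⟨c • a, (smul_mul_assoc c a e).symm⟩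

section Aux
open scoped CStarAlgebra

lemma aux_cnorm {A : Type*} [NonUnitalCStarAlgebra A] (e : A) (he₁ : star e = e)
    (he₂ : e * e = e) (x : Fin 3 → A) (hx : ∀ i, x i * e = x i) :
    cnorm (Matrix.of fun i j : Fin 3 => if j = 0 then x i else 0) =
      Real.sqrt ‖∑ i, star (x i) * x i‖ := by
  let _ := CStarAlgebra.spectralOrder A
  have _ := CStarAlgebra.spectralOrderedRing A
  have hmv : ∀ v : Fin 3 → A, ∀ i,
      (Matrix.of fun i j : Fin 3 => if j = 0 then x i else 0).mulVec v i = x i * v 0 := by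
    intro v i
    simp [Matrix.mulVec, dotProduct]
  have hs : ∀ v : Fin 3 → A, ∑ i, star (x i * v 0) * (x i * v 0)
      = star (v 0) * (∑ i, star (x i) * x i) * v 0 := by
    intro v
    simp [Finset.mul_sum, Finset.sum_mul, mul_assoc]
  have hne : ‖e‖ ≤ 1 := by
    have h : ‖e‖ * ‖e‖ = ‖e‖ := by
      rw [← CStarRing.norm_star_mul_self, he₁, he₂]
    nlinarith [norm_nonneg e]
  unfold cnorm
  simp only [hmv, hs]
  apply IsGreatest.csSup_eq
  constructor
  · refine ⟨fun i => if i = 0 then e else 0, ?_, ?_⟩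
    · simp [he₁, he₂, hne]
    · simp only [if_true]
      congr 2
      rw [he₁, mul_assoc, Finset.sum_mul, Finset.mul_sum]
      refine Finset.sum_congr rfl fun i _ => ?_
      rw [mul_assoc, hx i, ← mul_assoc]
      nth_rw 2 [← hx i]
      nth_rw 1 [← hx i]
      rw [star_mul, he₁]
      have := hx i
      have h2 : e * star (x i) = star (x i) := by
        rw [← he₁, ← star_mul, hx i]
      simp only [← mul_assoc, h2]
      rw [mul_assoc, hx i]
  · rintro r ⟨v, hv, rfl⟩
    apply Real.sqrt_le_sqrt
    have h0 : ‖v 0‖ * ‖v 0‖ ≤ 1 := by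
      rw [← CStarRing.norm_star_mul_self]
      refine le_trans ?_ hv
      apply CStarAlgebra.norm_le_norm_of_nonneg_of_le (star_mul_self_nonneg _)
      exact Finset.single_le_sum (f := fun i => star (v i) * v i)
        (fun i _ => star_mul_self_nonneg _) (Finset.mem_univ 0)
    calc _ ≤ ‖star (v 0)‖ * ‖∑ i, star (x i) * x i‖ * ‖v 0‖ := norm_mul₃_le
      _ = ‖∑ i, star (x i) * x i‖ * (‖v 0‖ * ‖v 0‖) := by rw [norm_star]; ring
      _ ≤ _ := mul_le_of_le_one_right (norm_nonneg _) h0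

lemma aux_mem {A : Type*} [NonUnitalCStarAlgebra A] {e : A}
    (he₂ : e * e = e) (x : principalLeftIdeal A e) : (x : A) * e = x := by
  obtain ⟨x, a, rfl⟩ := x
  simp [mul_assoc, he₂]

/-- The column-norm preservation hypothesis. -/
def ColIso {A B : Type*} [NonUnitalCStarAlgebra A] [NonUnitalCStarAlgebra B] {e : A} {f : B}
    (φ : principalLeftIdeal A e ≃ₗ[ℂ] principalLeftIdeal B f) : Prop :=
  ∀ u v w : principalLeftIdeal A e,
    ‖star (φ u : B) * φ u + star (φ v : B) * φ v + star (φ w : B) * φ w‖ =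
    ‖star (u : A) * u + star (v : A) * v + star (w : A) * w‖

variable {A B : Type*} [NonUnitalCStarAlgebra A] [NonUnitalCStarAlgebra B] {e : A} {f : B}

lemma ColIso.symm {φ : principalLeftIdeal A e ≃ₗ[ℂ] principalLeftIdeal B f} (h : ColIso φ) :
    ColIso φ.symm := by
  intro u v w
  simpa using (h (φ.symm u) (φ.symm v) (φ.symm w)).symm

lemma aux_le [PartialOrder B] [StarOrderedRing B] (hf₁ : star f = f) (hf₂ : f * f = f)
    {φ : principalLeftIdeal A e ≃ₗ[ℂ] principalLeftIdeal B f} (h : ColIso φ)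
    (u v w z : principalLeftIdeal A e)
    (huv : star (u : A) * u + star (v : A) * v = star (w : A) * w + star (z : A) * z) :
    star (φ u : B) * φ u + star (φ v : B) * φ v ≤
      star (φ w : B) * φ w + star (φ z : B) * φ z := by
  have key : ∀ x : principalLeftIdeal B f, f * (star (x : B) * x) * f = star (x : B) * x := by
    intro x
    have h1 := aux_mem hf₂ x
    have h2 : f * star (x : B) = star (x : B) := by
      nth_rw 1 [← hf₁]
      rw [← star_mul, h1]
    rw [← mul_assoc, h2, mul_assoc, h1]
  set a := star (φ u : B) * φ u + star (φ v : B) * φ v with ha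
  set b := star (φ w : B) * φ w + star (φ z : B) * φ z with hb
  have hfa : f * a * f = a := by rw [ha, mul_add, add_mul, key, key]
  have hfb : f * b * f = b := by rw [hb, mul_add, add_mul, key, key]
  have conj : ∀ c : B, IsSelfAdjoint c → f * c * f ≤ ‖c‖ • f := by
    intro c hc
    have := CStarAlgebra.star_left_conjugate_le_norm_smul (a := f) (b := c) (hb := hc)
    rwa [hf₁, hf₂] at this
  have hbsa : IsSelfAdjoint b := (IsSelfAdjoint.star_mul_self _).add (.star_mul_self _)
  have hasa : IsSelfAdjoint a := (IsSelfAdjoint.star_mul_self _).add (.star_mul_self _)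
  have hp : 0 ≤ ‖b‖ • f - b := by
    have := conj b hbsa
    rw [hfb] at this
    exact sub_nonneg.mpr this
  set p := ‖b‖ • f - b with hpdef
  have hfp : f * p * f = p := by
    rw [hpdef, mul_sub, sub_mul, hfb, mul_smul_comm, smul_mul_assoc, hf₂, hf₂]
  set q : B := CFC.sqrt p * f with hq
  have hqq : star q * q = p := by
    rw [hq, star_mul, hf₁, (CFC.sqrt_nonneg p).isSelfAdjoint.star_eq, ← mul_assoc,
      mul_assoc f, CFC.sqrt_mul_sqrt_self p hp, hfp]
  obtain ⟨t, ht⟩ := φ.surjective ⟨q, _, hq⟩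
  have htq : (φ t : B) = q := by rw [ht]
  have e1 := h t u v
  have e2 := h t w z
  rw [add_assoc, add_assoc, ← ha, htq, hqq, huv] at e1
  rw [add_assoc, add_assoc, ← hb, htq, hqq, ← e1] at e2
  have hn : ‖p + a‖ ≤ ‖b‖ := by
    rw [← e2, hpdef, sub_add_cancel, norm_smul, norm_norm]
    have hne : ‖f‖ ≤ 1 := by
      have h : ‖f‖ * ‖f‖ = ‖f‖ := by
        rw [← CStarRing.norm_star_mul_self, hf₁, hf₂]
      nlinarith [norm_nonneg f]
    exact mul_le_of_le_one_right (norm_nonneg _) hne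
  have hf0 : 0 ≤ f := by
    have := star_mul_self_nonneg f
    rwa [hf₁, hf₂] at this
  have h3 := conj (p + a) (hp.isSelfAdjoint.add hasa)
  rw [mul_add, add_mul, hfp, hfa] at h3
  have h4 : p + a ≤ ‖b‖ • f := h3.trans (smul_le_smul_of_nonneg_right hn hf0)
  rw [hpdef, sub_add_eq_add_sub, sub_le_iff_le_add] at h4
  exact le_of_add_le_add_left h4

lemma aux_eq (hf₁ : star f = f) (hf₂ : f * f = f)
    {φ : principalLeftIdeal A e ≃ₗ[ℂ] principalLeftIdeal B f} (h : ColIso φ)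
    (u v w z : principalLeftIdeal A e)
    (huv : star (u : A) * u + star (v : A) * v = star (w : A) * w + star (z : A) * z) :
    star (φ u : B) * φ u + star (φ v : B) * φ v =
      star (φ w : B) * φ w + star (φ z : B) * φ z := by
  let _ := CStarAlgebra.spectralOrder B
  have _ := CStarAlgebra.spectralOrderedRing B
  exact le_antisymm (aux_le hf₁ hf₂ h u v w z huv) (aux_le hf₁ hf₂ h w z u v huv.symm)

lemma aux_re {R : Type*} [NonUnitalRing R] [StarRing R] (x y x' y' : R) :
    (star (x + y) * (x + y) + star (x' - y') * (x' - y') =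
      star (x' + y') * (x' + y') + star (x - y) * (x - y)) ↔
    (2 : ℕ) • (star x * y + star y * x) = (2 : ℕ) • (star x' * y' + star y' * x') := by
  rw [← sub_eq_zero, ← sub_eq_zero (a := (2 : ℕ) • _)]
  apply Eq.congr_left
  simp only [star_add, star_sub, add_mul, mul_add, sub_mul, mul_sub]
  abel

lemma aux_inner (hf₁ : star f = f) (hf₂ : f * f = f)
    {φ : principalLeftIdeal A e ≃ₗ[ℂ] principalLeftIdeal B f} (h : ColIso φ)
    (x y x' y' : principalLeftIdeal A e)
    (hxy : star (x : A) * y = star (x' : A) * y') :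
    star (φ x : B) * φ y = star (φ x' : B) * φ y' := by
  have hyx : star (y : A) * x = star (y' : A) * x' := by
    simpa using congrArg star hxy
  have two : ∀ (s t : B), (2 : ℕ) • s = (2 : ℕ) • t → s = t := by
    intro s t hst
    have h2 : (2 : ℂ) • s = (2 : ℂ) • t := by
      rw [two_smul, two_smul, ← two_nsmul, ← two_nsmul, hst]
    exact smul_right_injective B (two_ne_zero (α := ℂ)) h2
  have gen : ∀ x y x' y' : principalLeftIdeal A e,
      star (x : A) * y + star (y : A) * x = star (x' : A) * y' + star (y' : A) * x' →
      star (φ x : B) * φ y + star (φ y : B) * φ x =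
        star (φ x' : B) * φ y' + star (φ y' : B) * φ x' := by
    intro x y x' y' hh
    apply two
    rw [← aux_re]
    have := aux_eq hf₁ hf₂ h (x + y) (x' - y') (x' + y') (x - y) (by
      simp only [Submodule.coe_add, Submodule.coe_sub]
      rw [aux_re, hh])
    simpa only [map_add, map_sub, Submodule.coe_add, Submodule.coe_sub] using this
  have g1 := gen x y x' y' (by rw [hxy, hyx])
  have g2 := gen x (Complex.I • y) x' (Complex.I • y') (by
    simp only [Submodule.coe_smul, star_smul, mul_smul_comm, smul_mul_assoc, hxy, hyx])
  simp only [map_smul, Submodule.coe_smul, star_smul, mul_smul_comm, smul_mul_assoc] at g2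
  have hI : star Complex.I = -Complex.I := by simp
  rw [hI, neg_smul, neg_smul, ← smul_neg, ← smul_neg, ← smul_add, ← smul_add] at g2
  have g3 := smul_right_injective B Complex.I_ne_zero g2
  apply two
  have := congrArg₂ (· + ·) g1 g3
  calc _ = _ := by rw [two_nsmul]; abel_nf
    _ = _ := this
    _ = _ := by rw [two_nsmul]; abel_nf

lemma aux_zero (x : A) (h : star x * x + star x * x = 0) : x = 0 := by
  have h2 : (2 : ℂ) • (star x * x) = 0 := by rw [two_smul, h]
  rcases smul_eq_zero.mp h2 with h | h
  · norm_num at h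
  · exact CStarRing.star_mul_self_eq_zero_iff x |>.mp h

lemma aux_corner (he₁ : star e = e) (he₂ : e * e = e) (hf₁ : star f = f) (hf₂ : f * f = f)
    {φ : principalLeftIdeal A e ≃ₗ[ℂ] principalLeftIdeal B f} (h : ColIso φ)
    (E : principalLeftIdeal A e) (hE : (E : A) = e) (hφ : (φ E : B) = f)
    (x : principalLeftIdeal A e) (hx : e * (x : A) = x) : f * (φ x : B) = φ x := by
  obtain ⟨x', hx'⟩ := φ.surjective
    ⟨f * (φ x : B), f * (φ x : B), by rw [mul_assoc, aux_mem hf₂]⟩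
  have hb : (φ x' : B) = f * φ x := by rw [hx']
  have s1 := aux_inner he₁ he₂ h.symm (φ E) (φ x) (φ E) (φ x') (by
    rw [hφ, hb, hf₁, ← mul_assoc, hf₂])
  simp only [LinearEquiv.symm_apply_apply, hE, he₁, hx] at s1
  have s2 := aux_eq he₁ he₂ h.symm (φ x) 0 (φ x') (φ (x - x')) (by
    simp only [map_sub, Submodule.coe_sub, hb, Submodule.coe_zero, star_zero, zero_mul, star_mul,
      hf₁, star_sub, sub_mul, mul_sub]
    have : f * (f * (φ x : B)) = f * φ x := by rw [← mul_assoc, hf₂]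
    simp only [mul_assoc, this]
    abel)
  simp only [LinearEquiv.symm_apply_apply, map_zero, Submodule.coe_zero, star_zero, zero_mul,
    Submodule.coe_sub] at s2
  have s1' : star (x : A) = star (x' : A) * e := by rw [s1, star_mul, he₁]
  have s3 : star (x' : A) * x' =
      star (x : A) * x + star ((x : A) - x') * ((x : A) - x') := by
    have a1 : star (x : A) * x' = star (x : A) * x := by
      rw [← hx, star_mul, he₁, mul_assoc, ← s1, mul_assoc, hx, hx]
    have a2 : star (x' : A) * x = star (x : A) * x := by
      simpa using congrArg star a1
    simp only [star_sub, sub_mul, mul_sub, a1, a2]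
    abel
  rw [s3] at s2
  have s4 : (x : A) - x' = 0 := by
    apply aux_zero
    have := s2
    rw [add_assoc, add_right_inj] at this
    exact this.symm
  have : x = x' := Subtype.ext (sub_eq_zero.mp s4)
  rw [← hb, ← this]

lemma aux_mul (he₁ : star e = e) (he₂ : e * e = e) (hf₁ : star f = f) (hf₂ : f * f = f)
    {φ : principalLeftIdeal A e ≃ₗ[ℂ] principalLeftIdeal B f} (h : ColIso φ)
    (E : principalLeftIdeal A e) (hE : (E : A) = e) (hφ : (φ E : B) = f)
    (x y z : principalLeftIdeal A e) (hz : (z : A) = x * y) : (φ z : B) = φ x * φ y := by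
  have inn : ∀ x y w : principalLeftIdeal A e, (w : A) = star (x : A) * y →
      (φ w : B) = star (φ x : B) * φ y := by
    intro x y w hw
    have hew : e * (w : A) = w := by
      rw [hw, ← mul_assoc]
      nth_rw 1 [← he₁]
      rw [← star_mul, aux_mem he₂]
    have := aux_inner hf₁ hf₂ h E w x y (by rw [hE, he₁, hew, hw])
    rw [hφ, hf₁, aux_corner he₁ he₂ hf₁ hf₂ h E hE hφ w hew] at this
    exact this
  obtain ⟨t, ht⟩ := φ.surjective (φ z - ⟨(φ x : B) * φ y, (φ x : B) * φ y, by
    rw [mul_assoc, aux_mem hf₂]⟩)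
  have ht' : (φ t : B) = φ z - φ x * φ y := by rw [ht]; rfl
  have mem : ∀ a b : principalLeftIdeal A e, star (a : A) * b ∈ principalLeftIdeal A e :=
    fun a b => ⟨star (a : A) * b, by rw [mul_assoc, aux_mem he₂]⟩
  have i1 := inn t z ⟨_, mem t z⟩ rfl
  have i2 := inn x t ⟨_, mem x t⟩ rfl
  have i3 := inn ⟨_, mem x t⟩ y ⟨_, mem t z⟩ (by
    simp only [hz, star_mul, star_star, mul_assoc])
  rw [i1, i2, star_mul, star_star, mul_assoc] at i3
  have : star (φ t : B) * φ t = 0 := by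
    nth_rw 2 [ht']
    rw [mul_sub, i3, sub_self]
  rw [CStarRing.star_mul_self_eq_zero_iff, ht', sub_eq_zero] at this
  exact this

end Aux

theorem multiplicative_iff_unital
    {A B : Type*} [NonUnitalCStarAlgebra A] [NonUnitalCStarAlgebra B]
    (e : A) (f : B) (he₁ : star e = e) (he₂ : e * e = e)
    (hf₁ : star f = f) (hf₂ : f * f = f)
    (φ : principalLeftIdeal A e →ₗ[ℂ] principalLeftIdeal B f)
    (hbij : Function.Bijective φ)
    (hci : IsCompletelyIsometric (fun x => (φ x : B))) :
    (∀ x y z : principalLeftIdeal A e, (z : A) = (x : A) * (y : A) →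
        (φ z : B) = (φ x : B) * (φ y : B)) ↔
      (φ ⟨e, e, he₂.symm⟩ : B) = f := by
  have hcol : ColIso (LinearEquiv.ofBijective φ hbij) := by
    intro u v w
    simp only [LinearEquiv.ofBijective_apply]
    have h1 := hci 3 (Matrix.of fun i j : Fin 3 => if j = 0 then ![u, v, w] i else 0)
    have m1 : (Matrix.of fun i j : Fin 3 => if j = 0 then ![u, v, w] i else 0).map
        (fun x => (φ x : B)) = Matrix.of fun i j : Fin 3 =>
          if j = 0 then (φ (![u, v, w] i) : B) else 0 := by
      ext i j
      by_cases hj : j = 0 <;> simp [hj]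
    have m2 : (Matrix.of fun i j : Fin 3 => if j = 0 then ![u, v, w] i else 0).map
        ((↑) : principalLeftIdeal A e → A) = Matrix.of fun i j : Fin 3 =>
          if j = 0 then ((![u, v, w] i : principalLeftIdeal A e) : A) else 0 := by
      ext i j
      by_cases hj : j = 0 <;> simp [hj]
    rw [m1, m2, aux_cnorm f hf₁ hf₂ _ (fun i => aux_mem hf₂ _),
      aux_cnorm e he₁ he₂ _ (fun i => aux_mem he₂ _),
      Real.sqrt_inj (norm_nonneg _) (norm_nonneg _)] at h1
    simpa [Fin.sum_univ_three] using h1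
  constructor
  · intro hm
    let _ := CStarAlgebra.spectralOrder B
    have _ := CStarAlgebra.spectralOrderedRing B
    set E : principalLeftIdeal A e := ⟨e, e, he₂.symm⟩ with hE
    obtain ⟨t, ht⟩ := hbij.2 ⟨f, f, hf₂.symm⟩
    have hfg : f * (φ E : B) = f := by
      have := hm t E t (aux_mem he₂ t).symm
      rw [ht] at this
      exact this.symm
    have hgf : (φ E : B) * f = φ E := aux_mem hf₂ _
    have hgs : star (φ E : B) * f = f := by
      simpa [hf₁] using congrArg star hfg
    have hfgs : f * star (φ E : B) = star (φ E : B) := by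
      simpa [hf₁] using congrArg star hgf
    have hn : ‖star (φ E : B) * φ E‖ ≤ 1 := by
      have h1 := hcol E 0 0
      simp only [LinearEquiv.ofBijective_apply, map_zero, Submodule.coe_zero, star_zero, zero_mul,
        add_zero] at h1
      rw [h1]
      simp only [hE, he₁, he₂]
      have h : ‖e‖ * ‖e‖ = ‖e‖ := by
        rw [← CStarRing.norm_star_mul_self, he₁, he₂]
      nlinarith [norm_nonneg e]
    have hf0 : 0 ≤ f := by
      have := star_mul_self_nonneg f
      rwa [hf₁, hf₂] at this
    have hle : star (φ E : B) * φ E ≤ f := by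
      have := CStarAlgebra.star_left_conjugate_le_norm_smul (a := f)
        (b := star (φ E : B) * φ E) (hb := .star_mul_self _)
      rw [hf₁, hf₂, ← mul_assoc, hfgs, mul_assoc, hgf] at this
      refine this.trans ?_
      simpa using smul_le_smul_of_nonneg_right hn hf0
    have hh : star ((φ E : B) - f) * ((φ E : B) - f) = star (φ E : B) * φ E - f := by
      simp only [star_sub, hf₁, sub_mul, mul_sub, hgs, hfg, hf₂]
      abel
    have h0 : star ((φ E : B) - f) * ((φ E : B) - f) = 0 :=
      le_antisymm (by rw [hh]; exact sub_nonpos.mpr hle) (star_mul_self_nonneg _)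
    rw [CStarRing.star_mul_self_eq_zero_iff, sub_eq_zero] at h0
    exact h0
  · intro hφ x y z hz
    exact aux_mul he₁ he₂ hf₁ hf₂ hcol ⟨e, e, he₂.symm⟩ rfl hφ x y z hz
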